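/- Let A be a C*-algebra and let F be a JB*-subtriple of A which is a Chebyshev subspace of A. Suppose a, b, c ∈ F are nonzero and mutually orthogonal, and let F_a and F_b denote the smallest norm-closed subtriples of A containing a and b respectively. Then L(a₁,a₂)L(b₁,b₂)(x) ∈ F for all a₁, a₂ ∈ F_a, all b₁, b₂ ∈ F_b, and all x ∈ A, where L(u,v)(z) = (u v* z + z v* u)/2. -/

import Mathlib

/-- A norm-closed subtriple of a C*-algebra `A`: a norm-closed complex-linear
subspace closed under the triple product `{x,y,z} = (x y* z + z y* x)/2`. -/
def IsClosedSubtriple {A : Type*} [NonUnitalNormedRing A] [StarRing A]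
    [NormedSpace ℂ A] (S : Set A) : Prop :=
  IsClosed S ∧ (∃ p : Submodule ℂ A, (p : Set A) = S) ∧
    ∀ x ∈ S, ∀ y ∈ S, ∀ z ∈ S, (2 : ℂ)⁻¹ • (x * star y * z + z * star y * x) ∈ S

namespace ChebAux

section
variable {A : Type*} [NonUnitalCStarAlgebra A]

lemma left_bound (p x : A) (hp : star p = p) (s : ℝ) :
    ‖x + (Complex.I * s) • (p * x)‖ ≤ (1 + s ^ 2 * ‖p‖ ^ 2) * ‖x‖ := by
  have key : star (x + (Complex.I * s) • (p * x)) * (x + (Complex.I * s) • (p * x))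
      = star x * x + ((s : ℂ) ^ 2) • (star x * (p * (p * x))) := by
    simp only [star_add, star_smul, star_mul, hp, add_mul, mul_add, smul_mul_assoc,
      mul_smul_comm, smul_smul, mul_assoc, Complex.star_def, map_mul, Complex.conj_I,
      Complex.conj_ofReal]
    have h2 : (Complex.I * (s : ℂ)) * (s * -Complex.I) = (s : ℂ) ^ 2 := by
      linear_combination (-(s : ℂ) ^ 2) * Complex.I_mul_I
    have h3 : (s : ℂ) * -Complex.I = -(Complex.I * s) := by ring
    rw [smul_add, smul_smul, h2, h3, neg_smul]
    abel
  have h1 : ‖x + (Complex.I * s) • (p * x)‖ * ‖x + (Complex.I * s) • (p * x)‖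
      ≤ ((1 + s ^ 2 * ‖p‖ ^ 2) * ‖x‖) * ((1 + s ^ 2 * ‖p‖ ^ 2) * ‖x‖) := by
    rw [← CStarRing.norm_star_mul_self, key]
    calc _ ≤ ‖star x * x‖ + ‖((s : ℂ) ^ 2) • (star x * (p * (p * x)))‖ := norm_add_le _ _
      _ ≤ ‖x‖ * ‖x‖ + s ^ 2 * (‖x‖ * (‖p‖ * (‖p‖ * ‖x‖))) := by
        rw [CStarRing.norm_star_mul_self, norm_smul]
        have e1 : ‖(s : ℂ) ^ 2‖ = s ^ 2 := by simp
        rw [e1]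
        gcongr
        refine (norm_mul_le _ _).trans ?_
        rw [norm_star]
        gcongr
        refine (norm_mul_le _ _).trans ?_
        gcongr
        exact norm_mul_le _ _
      _ ≤ _ := by
        have : 0 ≤ s ^ 2 * ‖p‖ ^ 2 := by positivity
        have h' : 0 ≤ ‖x‖ * ‖x‖ := by positivity
        nlinarith [mul_nonneg this h', mul_nonneg (mul_nonneg this this) h']
  exact abs_le_of_sq_le_sq' (by simpa [sq] using h1) (by positivity) |>.2

lemma right_bound (q x : A) (hq : star q = q) (s : ℝ) :
    ‖x + (Complex.I * s) • (x * q)‖ ≤ (1 + s ^ 2 * ‖q‖ ^ 2) * ‖x‖ := by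
  have := left_bound q (star x) hq (-s)
  rw [← norm_star, norm_star x] at this
  simpa [hq] using this

/-- `x ↦ p x + x q` is hermitian, to second order. -/
lemma both_bound (p q x : A) (hp : star p = p) (hq : star q = q) (s : ℝ) :
    ‖x + (Complex.I * s) • (p * x + x * q)‖ ≤
      ((1 + s ^ 2 * ‖p‖ ^ 2) * (1 + s ^ 2 * ‖q‖ ^ 2) + s ^ 2 * (‖p‖ * ‖q‖)) * ‖x‖ := by
  have e : x + (Complex.I * s) • (p * x + x * q) =
      ((x + (Complex.I * s) • (x * q)) + (Complex.I * s) • (p * (x + (Complex.I * s) • (x * q))))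
        + ((s : ℂ) ^ 2) • (p * (x * q)) := by
    have h3 : (Complex.I * (s : ℂ)) * (Complex.I * s) = - (s : ℂ) ^ 2 := by
      linear_combination ((s : ℂ) ^ 2) * Complex.I_mul_I
    simp only [mul_add, smul_add, mul_smul_comm, smul_smul, h3, neg_smul]
    abel
  rw [e]
  have h1 := left_bound p (x + (Complex.I * s) • (x * q)) hp s
  have h2 := right_bound q x hq s
  have h4 : ‖((s : ℂ) ^ 2) • (p * (x * q))‖ ≤ s ^ 2 * (‖p‖ * (‖x‖ * ‖q‖)) := by
    rw [norm_smul]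
    have e1 : ‖(s : ℂ) ^ 2‖ = s ^ 2 := by simp
    rw [e1]
    gcongr
    refine (norm_mul_le _ _).trans ?_
    gcongr
    exact norm_mul_le _ _
  have h5 : (1 + s ^ 2 * ‖p‖ ^ 2) * ‖x + (Complex.I * s) • (x * q)‖ ≤
      (1 + s ^ 2 * ‖p‖ ^ 2) * ((1 + s ^ 2 * ‖q‖ ^ 2) * ‖x‖) := by gcongr
  refine (norm_add_le _ _).trans ?_
  linarith

/-- `1 - i t L` is expansive. -/
lemma expansive (p q x : A) (hp : star p = p) (hq : star q = q) (t : ℝ) (ht : 0 < t) :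
    ‖x‖ ≤ ‖x - (Complex.I * t) • (p * x + x * q)‖ := by
  set w := x - (Complex.I * t) • (p * x + x * q) with hw
  have main : ∀ s : ℝ, 0 < s → ‖x‖ ≤ ‖w‖ + t * (s * (‖p‖ ^ 2 + ‖q‖ ^ 2 + ‖p‖ * ‖q‖
      + s ^ 2 * ‖p‖ ^ 2 * ‖q‖ ^ 2) * ‖x‖) := by
    intro s hs
    have hb := both_bound p q x hp hq s
    have e : ((1 + s / t : ℝ) : ℂ) • x = (x + (Complex.I * s) • (p * x + x * q))
        + ((s / t : ℝ) : ℂ) • w := by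
      have h3 : ((s / t : ℝ) : ℂ) * (Complex.I * t) = Complex.I * s := by
        have : (t : ℂ) ≠ 0 := by exact_mod_cast ht.ne'
        push_cast
        field_simp
      rw [hw, smul_sub, smul_smul, h3]
      push_cast
      rw [add_smul, one_smul]
      abel
    have hn := congrArg norm e
    rw [norm_smul] at hn
    have hle := norm_add_le (x + (Complex.I * s) • (p * x + x * q)) (((s / t : ℝ) : ℂ) • w)
    rw [← hn, norm_smul, Complex.norm_real, Complex.norm_real, Real.norm_of_nonneg (by positivity),
      Real.norm_of_nonneg (by positivity)] at hle
    have h6 : (s / t) * ‖x‖ ≤ (s / t) * (‖w‖ + t * (s * (‖p‖ ^ 2 + ‖q‖ ^ 2 + ‖p‖ * ‖q‖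
      + s ^ 2 * ‖p‖ ^ 2 * ‖q‖ ^ 2) * ‖x‖)) := by
      have : (s / t) * (t * (s * (‖p‖ ^ 2 + ‖q‖ ^ 2 + ‖p‖ * ‖q‖
        + s ^ 2 * ‖p‖ ^ 2 * ‖q‖ ^ 2) * ‖x‖)) = s * (s * (‖p‖ ^ 2 + ‖q‖ ^ 2 + ‖p‖ * ‖q‖
        + s ^ 2 * ‖p‖ ^ 2 * ‖q‖ ^ 2) * ‖x‖) := by
        field_simp
      rw [mul_add, this]
      nlinarith
    exact le_of_mul_le_mul_left h6 (by positivity)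
  have lim : Filter.Tendsto (fun s : ℝ => ‖w‖ + t * (s * (‖p‖ ^ 2 + ‖q‖ ^ 2 + ‖p‖ * ‖q‖
      + s ^ 2 * ‖p‖ ^ 2 * ‖q‖ ^ 2) * ‖x‖)) (nhdsWithin 0 (Set.Ioi 0)) (nhds ‖w‖) := by
    refine Filter.Tendsto.mono_left ?_ nhdsWithin_le_nhds
    have hc : Continuous (fun s : ℝ => ‖w‖ + t * (s * (‖p‖ ^ 2 + ‖q‖ ^ 2 + ‖p‖ * ‖q‖
      + s ^ 2 * ‖p‖ ^ 2 * ‖q‖ ^ 2) * ‖x‖)) := by fun_prop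
    simpa using hc.tendsto 0
  refine ge_of_tendsto lim ?_
  filter_upwards [self_mem_nhdsWithin] with s hs using main s hs

lemma orth_of_L_eq_zero (c z : A) (h : c * star c * z + z * (star c * c) = 0) :
    z * star c = 0 ∧ star c * z = 0 := by
  letI := CStarAlgebra.spectralOrder A
  haveI := CStarAlgebra.spectralOrderedRing A
  have h1 : (c * star c) * (z * star z) = - ((z * star c) * star (z * star c)) := by
    have : (c * star c) * (z * star z) + ((z * star c) * star (z * star c)) =
        (c * star c * z + z * (star c * c)) * star z := by
      simp [add_mul, mul_assoc]
    rw [h, zero_mul] at this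
    exact eq_neg_of_add_eq_zero_left this
  have hcomm : Commute (c * star c) (z * star z) := by
    have h2 := congrArg star h1
    rw [star_mul, star_neg] at h2
    simp only [star_mul, star_star] at h2 h1
    exact h1.trans h2.symm
  have h3 := Commute.mul_nonneg (mul_star_self_nonneg c) (mul_star_self_nonneg z) hcomm
  rw [h1] at h3
  have h4 : (z * star c) * star (z * star c) = 0 :=
    le_antisymm (neg_nonneg.mp h3) (mul_star_self_nonneg _)
  have h5 : z * star c = 0 := (CStarRing.mul_star_self_eq_zero_iff _).mp h4
  refine ⟨h5, ?_⟩
  rw [← mul_assoc, h5, zero_mul, add_zero] at h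
  have h6 : star (star c * z) * (star c * z) = 0 := by
    simp only [star_mul, star_star]
    rw [mul_assoc, ← mul_assoc c, h, mul_zero]
  exact (CStarRing.star_mul_self_eq_zero_iff _).mp h6

lemma norm_sub_le_of_orth (z c : A) (h : z * star c = 0 ∧ star c * z = 0) (hn : ‖c‖ ≤ ‖z‖) :
    ‖z - c‖ ≤ ‖z‖ := by
  have h' : star z * c = 0 := by simpa using congrArg star h.2
  have e : star (z - c) * (z - c) = star z * z + star c * c := by
    simp [sub_mul, mul_sub, h.2, h']
  have e2 := IsSelfAdjoint.norm_add_eq_max (a := star z * z) (b := star c * c)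
    (IsSelfAdjoint.star_mul_self z) (IsSelfAdjoint.star_mul_self c)
    (by rw [mul_assoc, ← mul_assoc z, h.1, zero_mul, mul_zero])
  rw [← e, CStarRing.norm_star_mul_self, CStarRing.norm_star_mul_self,
    CStarRing.norm_star_mul_self] at e2
  have : ‖c‖ * ‖c‖ ≤ ‖z‖ * ‖z‖ := by gcongr
  rw [max_eq_left this] at e2
  exact abs_le_of_sq_le_sq' (by simpa [sq] using e2.le) (by positivity) |>.2

lemma exists_resolvent {G : Type*} [NormedAddCommGroup G] [NormedSpace ℂ G] [CompleteSpace G]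
    (M : G →L[ℂ] G) (v : G) : ∃ t : ℝ, 0 < t ∧ ∃ f : G, f - (Complex.I * t) • M f = v := by
  obtain ⟨t, ht, htn⟩ : ∃ t : ℝ, 0 < t ∧ ‖(Complex.I * t) • M‖ < 1 := by
    refine ⟨(‖M‖ + 1)⁻¹, by positivity, ?_⟩
    rw [norm_smul, norm_mul, Complex.norm_I, one_mul, Complex.norm_real,
      Real.norm_of_nonneg (by positivity), inv_mul_lt_iff₀ (by positivity)]
    linarith
  let U := Units.oneSub _ htn
  refine ⟨t, ht, (U⁻¹ : (G →L[ℂ] G)ˣ).1 v, ?_⟩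
  have h1 : (U.1 * (U⁻¹).1) v = v := by rw [Units.mul_inv]; rfl
  exact h1

/-- Everything orthogonal to a nonzero element of a Chebyshev subtriple lies in it. -/
lemma mem_of_orth (F : Submodule ℂ A) (hFclosed : IsClosed (F : Set A))
    (hFtriple : ∀ x ∈ F, ∀ y ∈ F, ∀ z ∈ F,
      (2 : ℂ)⁻¹ • (x * star y * z + z * star y * x) ∈ F)
    (hCheb : ∀ x : A, ∃! v : A, v ∈ F ∧ ‖x - v‖ = Metric.infDist x (F : Set A))
    (c : A) (hc : c ∈ F) (hc0 : c ≠ 0) (y : A) (hy : y * star c = 0 ∧ star c * y = 0) :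
    y ∈ F := by
  obtain ⟨v, ⟨hvF, hv⟩, huniq⟩ := hCheb y
  have uniq : ∀ f ∈ F, ‖y - f‖ ≤ ‖y - v‖ → f = v := by
    intro f hf hle
    refine huniq f ⟨hf, le_antisymm (hle.trans hv.le) ?_⟩
    rw [← dist_eq_norm]
    exact Metric.infDist_le_dist_of_mem hf
  haveI : CompleteSpace F := hFclosed.completeSpace_coe
  have hp : star (c * star c) = c * star c := by simp
  have hq : star (star c * c) = star c * c := by simp
  let L : A →L[ℂ] A := ContinuousLinearMap.mul ℂ A (c * star c)
    + (ContinuousLinearMap.mul ℂ A).flip (star c * c)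
  have hL : ∀ x, L x = c * star c * x + x * (star c * c) := fun x => by simp [L]
  have hLF : ∀ x ∈ F, L x ∈ F := by
    intro x hx
    have := F.smul_mem (2 : ℂ) (hFtriple c hc c hc x hx)
    rw [smul_smul] at this
    rw [hL]
    simpa [mul_assoc] using this
  let M : F →L[ℂ] F := (L.comp F.subtypeL).codRestrict F (fun x => hLF x x.2)
  obtain ⟨t, ht, f, hf'⟩ := exists_resolvent M ⟨v, hvF⟩
  have hf : (f : A) - (Complex.I * t) • L f = v := congrArg Subtype.val hf'
  have hLy : L y = 0 := by
    rw [hL, mul_assoc, hy.2, ← mul_assoc y, hy.1]; simp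
  have hfv : (f : A) = v := by
    refine uniq f f.2 ?_
    have := expansive (c * star c) (star c * c) (y - f) hp hq t ht
    rw [← hL, map_sub, hLy, zero_sub, smul_neg, sub_neg_eq_add] at this
    rw [← hf]
    refine this.trans (le_of_eq ?_)
    congr 1
    abel
  have hLv : L v = 0 := by
    rw [hfv] at hf
    have h0 : (Complex.I * t) • L v = 0 := by simpa using hf
    refine (smul_eq_zero.mp h0).resolve_left ?_
    simp [ht.ne']
  rw [hL] at hLv
  have hvc := orth_of_L_eq_zero c v hLv
  by_cases hz : y - v = 0
  · rw [sub_eq_zero.mp hz]; exact hvF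
  exfalso
  have hzn : 0 < ‖y - v‖ := norm_pos_iff.mpr hz
  have hcn : 0 < ‖c‖ := norm_pos_iff.mpr hc0
  set r : ℝ := ‖y - v‖ / ‖c‖ with hr
  have hr0 : 0 < r := by positivity
  have h1 : ‖(y - v) - (r : ℂ) • c‖ ≤ ‖y - v‖ := by
    apply norm_sub_le_of_orth
    · rw [star_smul, mul_smul_comm, smul_mul_assoc, sub_mul, mul_sub, hy.1, hy.2, hvc.1, hvc.2]
      simp
    · rw [norm_smul, Complex.norm_real, Real.norm_of_nonneg hr0.le, hr,
        div_mul_cancel₀ _ hcn.ne']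
  have h2 := uniq (v + (r : ℂ) • c) (F.add_mem hvF (F.smul_mem _ hc)) (by
    rwa [← sub_sub])
  have h3 : (r : ℂ) • c = 0 := by simpa using h2
  rcases smul_eq_zero.mp h3 with h | h
  · exact hr0.ne' (by exact_mod_cast h)
  · exact hc0 h

lemma gen_orth (a d s : A) (had : a * star d = 0 ∧ star d * a = 0)
    (hs : s ∈ ⋂₀ {S : Set A | IsClosedSubtriple S ∧ a ∈ S}) :
    s * star d = 0 ∧ star d * s = 0 := by
  refine hs {x | x * star d = 0 ∧ star d * x = 0} ⟨⟨?_, ⟨⟨⟨⟨_, ?_⟩, ?_⟩, ?_⟩, rfl⟩, ?_⟩, had⟩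
  · exact (isClosed_eq (by fun_prop) continuous_const).inter
      (isClosed_eq (by fun_prop) continuous_const)
  · rintro x y ⟨h1, h2⟩ ⟨h3, h4⟩
    exact ⟨by rw [add_mul, h1, h3, add_zero], by rw [mul_add, h2, h4, add_zero]⟩
  · exact ⟨by simp, by simp⟩
  · rintro k x ⟨h1, h2⟩
    exact ⟨by rw [smul_mul_assoc, h1, smul_zero], by rw [mul_smul_comm, h2, smul_zero]⟩
  · rintro x ⟨h1, h2⟩ y - z ⟨h3, h4⟩
    constructor
    · rw [smul_mul_assoc, add_mul, mul_assoc _ z, h3, mul_assoc _ x, h1]; simp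
    · rw [mul_smul_comm, mul_add, mul_assoc x, mul_assoc z, ← mul_assoc _ x, ← mul_assoc _ z,
        h2, h4]; simp

lemma orth_symm (a b : A) (h : a * star b = 0 ∧ star b * a = 0) :
    b * star a = 0 ∧ star a * b = 0 :=
  ⟨by simpa using congrArg star h.1, by simpa using congrArg star h.2⟩

end

end ChebAux

/-- Let `A` be a C*-algebra and `F` a JB*-subtriple of `A` which is a
Chebyshev subspace of `A`. Suppose `a, b, c ∈ F` are nonzero and mutually orthogonal,
and let `F_a`, `F_b` be the smallest norm-closed subtriples of `A` containing `a` and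
`b` respectively. Then `L(a₁,a₂) L(b₁,b₂) (x) ∈ F` for all `a₁, a₂ ∈ F_a`,
`b₁, b₂ ∈ F_b` and `x ∈ A`, where `L(u,v)(z) = (u v* z + z v* u)/2`. -/
theorem L_L_generated_subtriples_maps_into_cebysev
    {A : Type*} [NonUnitalNormedRing A] [StarRing A] [CStarRing A]
    [NormedSpace ℂ A] [IsScalarTower ℂ A A] [SMulCommClass ℂ A A]
    [StarModule ℂ A] [CompleteSpace A]
    (F : Submodule ℂ A) (hFclosed : IsClosed (F : Set A))
    (hFtriple : ∀ x ∈ F, ∀ y ∈ F, ∀ z ∈ F,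
      (2 : ℂ)⁻¹ • (x * star y * z + z * star y * x) ∈ F)
    (hCheb : ∀ x : A, ∃! v : A, v ∈ F ∧ ‖x - v‖ = Metric.infDist x (F : Set A))
    (a b c : A) (ha : a ∈ F) (hb : b ∈ F) (hc : c ∈ F)
    (ha0 : a ≠ 0) (hb0 : b ≠ 0) (hc0 : c ≠ 0)
    (hab : a * star b = 0 ∧ star b * a = 0)
    (hac : a * star c = 0 ∧ star c * a = 0)
    (hbc : b * star c = 0 ∧ star c * b = 0) :
    ∀ a₁ ∈ ⋂₀ {S : Set A | IsClosedSubtriple S ∧ a ∈ S},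
    ∀ a₂ ∈ ⋂₀ {S : Set A | IsClosedSubtriple S ∧ a ∈ S},
    ∀ b₁ ∈ ⋂₀ {S : Set A | IsClosedSubtriple S ∧ b ∈ S},
    ∀ b₂ ∈ ⋂₀ {S : Set A | IsClosedSubtriple S ∧ b ∈ S},
    ∀ x : A,
      (2 : ℂ)⁻¹ • (a₁ * star a₂ * ((2 : ℂ)⁻¹ • (b₁ * star b₂ * x + x * star b₂ * b₁))
        + ((2 : ℂ)⁻¹ • (b₁ * star b₂ * x + x * star b₂ * b₁)) * star a₂ * a₁) ∈ F := by
  letI : NonUnitalCStarAlgebra A := { }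
  intro a₁ ha₁ a₂ ha₂ b₁ hb₁ b₂ hb₂ x
  have ac := ChebAux.gen_orth a c a₁ hac ha₁
  have bc := ChebAux.gen_orth b c b₁ hbc hb₁
  have ab : a₂ * star b₁ = 0 ∧ star b₁ * a₂ = 0 := by
    have h1 := ChebAux.gen_orth a b a₂ hab ha₂
    exact ChebAux.orth_symm _ _ (ChebAux.gen_orth b a₂ b₁ (ChebAux.orth_symm _ _ h1) hb₁)
  obtain ⟨ba1, ba2⟩ := ChebAux.orth_symm _ _ ab
  refine ChebAux.mem_of_orth F hFclosed hFtriple hCheb c hc hc0 _ ⟨?_, ?_⟩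
  · have e1 : ∀ u : A, u * a₁ * star c = 0 := fun u => by rw [mul_assoc, ac.1, mul_zero]
    have e2 : ∀ u : A, u * b₁ * star c = 0 := fun u => by rw [mul_assoc, bc.1, mul_zero]
    have e3 : a₁ * star a₂ * (b₁ * star b₂ * x) = 0 := by
      rw [mul_assoc a₁, mul_assoc b₁, ← mul_assoc (star a₂), ba2, zero_mul, mul_zero]
    rw [mul_smul_comm, mul_add, e3, zero_add, smul_mul_assoc, add_mul, e1, add_zero,
      smul_mul_assoc, ← mul_assoc, e2, smul_zero, smul_zero]
  · have e1 : ∀ u : A, star c * (a₁ * u) = 0 := fun u => by rw [← mul_assoc, ac.2, zero_mul]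
    have e2 : ∀ u : A, star c * (b₁ * u) = 0 := fun u => by rw [← mul_assoc, bc.2, zero_mul]
    have e3 : x * star b₂ * b₁ * star a₂ * a₁ = 0 := by
      rw [mul_assoc _ b₁, ba1, mul_zero, zero_mul]
    rw [smul_mul_assoc, smul_mul_assoc, add_mul, add_mul, e3, add_zero, mul_smul_comm, mul_add,
      mul_assoc a₁, e1, zero_add, mul_smul_comm]
    simp only [mul_assoc, e2, smul_zero]
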